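/- Let p ≥ 2 be real, M ∈ ℝ^{m₁×n}, N ∈ ℝ^{m₂×n}, b ∈ ℝⁿ, A ∈ ℝ^{d×n}, c ∈ ℝ^d, and f(x) = bᵀx + ‖Mx‖₂² + ‖Nx‖_p^p. Let x satisfy Ax = c, let Opt = inf{f(y) : Ay = c}, and let res_x be the residual at x (with g and R defined from x as in iterative refinement). Then: (i) for every Δ with AΔ = 0, res_x(Δ) ≤ f(x) − Opt; and (ii) for every x′ with Ax′ = c, res_x((x − x′)/16) ≥ (f(x) − f(x′))/(16p); hence the optimal residual value lies between (f(x) − Opt)/(16p) and f(x) − Opt. (This justifies the binary search over the residual value ν.) -/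

import Mathlib

open Matrix

/-!
Both bounds reduce to one-dimensional inequalities, summed over the coordinates of `M` and `N`.

* For (i), a residual step is compared with the actual decrease: `res Δ ≤ f x - f (x - Δ / p)`.
  On the coordinates of `N` this is `abs_sub_div_rpow_le`, which after scaling by `u` reads
  `|1 + s/p|^p ≤ 1 + s + 2s² + |s|^p`. For `|s| ≤ 2` the left side is at most `exp s`, and
  `exp s = (exp (s/2))² ≤ (1 + s/2 + s²/4)²`; for `|s| > 2` already `|1 + s/p| ≤ |s|`.

* For (ii), the coordinates of `N` need `le_abs_sub_rpow`, which after scaling reads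
  `1 + pt + (p/8)t² + 16p|t/16|^p ≤ |1 + t|^p`. Writing `|1 + t|^p = ((1 + t)²)^(p/2)`,
  Bernoulli gives `1 + pt + (p/2)t²`, whose slack absorbs the last term if `|t| ≤ 16`. For larger
  `|t|`, split `(1 + t)² = (1 + 2t + 3t²/4) + t²/4` and use superadditivity of `y ↦ y^(p/2)`.

The bounds on the supremum follow formally from (i) and (ii).
-/

lemma abs_one_add_div_rpow_le {p : ℝ} (hp : 2 ≤ p) (s : ℝ) :
    |1 + s / p| ^ p ≤ 1 + s + 2 * s ^ 2 + |s| ^ p := by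
  have hp0 : 0 < p := by linarith
  by_cases hs : |s| ≤ 2
  · obtain ⟨h1, h2⟩ := abs_le.1 hs
    have hnn : 0 ≤ 1 + s / p := by
      have : -1 ≤ s / p := by rw [le_div_iff₀ hp0]; linarith
      linarith
    rw [abs_of_nonneg hnn]
    have hA : (1 + s / p) ^ p ≤ Real.exp s := by
      calc (1 + s / p) ^ p ≤ (Real.exp (s / p)) ^ p := by
            apply Real.rpow_le_rpow hnn _ hp0.le
            linarith [Real.add_one_le_exp (s / p)]
        _ = Real.exp s := by
            rw [← Real.exp_mul, div_mul_cancel₀ _ hp0.ne']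
    have hB : Real.exp (s / 2) ≤ 1 + s / 2 + (s / 2) ^ 2 := by
      have h := Real.abs_exp_sub_one_sub_id_le (x := s / 2) (by
        rw [abs_le]; constructor <;> linarith)
      linarith [(abs_le.1 h).2]
    have hC : Real.exp s = Real.exp (s / 2) ^ 2 := by
      rw [← Real.exp_nat_mul]; congr 1; push_cast; ring
    have hD : Real.exp (s / 2) ^ 2 ≤ (1 + s / 2 + (s / 2) ^ 2) ^ 2 :=
      pow_le_pow_left₀ (Real.exp_pos _).le hB 2
    have hE : (1 + s / 2 + (s / 2) ^ 2) ^ 2 ≤ 1 + s + 2 * s ^ 2 := by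
      have h4 : s ^ 2 ≤ 4 := by nlinarith
      nlinarith [mul_nonneg (sq_nonneg s) (sub_nonneg.2 h4),
        mul_nonneg (sq_nonneg s) (sub_nonneg.2 h2)]
    have hF : 0 ≤ |s| ^ p := by positivity
    linarith
  · push Not at hs
    have h1 : |s / p| ≤ |s| / 2 := by
      rw [abs_div, abs_of_pos hp0]
      exact div_le_div_of_nonneg_left (abs_nonneg s) (by norm_num) hp
    have h2 : |1 + s / p| ≤ |s| := by
      have := abs_add_le 1 (s / p)
      rw [abs_one] at this
      linarith
    have h3 := Real.rpow_le_rpow (abs_nonneg _) h2 hp0.le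
    nlinarith [sq_nonneg (s + 1)]

/-- Scaled form of the upper bound: the `p`-th power along the step `-v / p`. -/
lemma abs_sub_div_rpow_le {p : ℝ} (hp : 2 ≤ p) (u v : ℝ) :
    |u - v / p| ^ p ≤
      |u| ^ p - |u| ^ (p - 2) * u * v + 2 * (|u| ^ (p - 2) * v ^ 2) + |v| ^ p := by
  have hp0 : 0 < p := by linarith
  rcases eq_or_ne u 0 with rfl | hu
  · have h1 : |0 - v / p| ^ p ≤ |v| ^ p := by
      apply Real.rpow_le_rpow (abs_nonneg _) _ hp0.le
      rw [zero_sub, abs_neg, abs_div, abs_of_pos hp0]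
      exact div_le_self (abs_nonneg v) (by linarith)
    have h2 : 0 ≤ |(0 : ℝ)| ^ (p - 2) * v ^ 2 := by positivity
    have h3 : 0 ≤ |(0 : ℝ)| ^ p := by positivity
    rw [mul_zero, zero_mul]
    refine h1.trans ?_
    generalize |(0 : ℝ)| ^ (p - 2) * v ^ 2 = q at *
    generalize |(0 : ℝ)| ^ p = r at *
    linarith
  · obtain ⟨s, rfl⟩ : ∃ s, v = -(s * u) := ⟨-v / u, by field_simp⟩
    have hw : |u| ^ p = |u| ^ (p - 2) * u ^ 2 := by
      rw [← sq_abs u, ← Real.rpow_natCast |u| 2, ← Real.rpow_add (abs_pos.2 hu)]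
      congr 1; push_cast; ring
    have e1 : |u - -(s * u) / p| ^ p = |u| ^ p * |1 + s / p| ^ p := by
      rw [← Real.mul_rpow (abs_nonneg _) (abs_nonneg _), ← abs_mul]
      congr 2; ring
    have e2 : |-(s * u)| ^ p = |u| ^ p * |s| ^ p := by
      rw [abs_neg, abs_mul, Real.mul_rpow (abs_nonneg _) (abs_nonneg _), mul_comm]
    have key := mul_le_mul_of_nonneg_left (abs_one_add_div_rpow_le hp s)
      (by positivity : 0 ≤ |u| ^ p)
    rw [e1, e2]
    refine key.trans (le_of_eq ?_)
    rw [hw]; ring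

lemma sixteen_mul_le_eight_rpow {p : ℝ} (hp : 2 ≤ p) : 16 * p ≤ (8 : ℝ) ^ p := by
  have h := one_add_mul_self_le_rpow_one_add (s := 63) (by norm_num) (p := p / 2) (by linarith)
  have e : (1 + 63 : ℝ) ^ (p / 2) = 8 ^ p := by
    rw [show (1 + 63 : ℝ) = 8 ^ (2 : ℝ) by norm_num, ← Real.rpow_mul (by norm_num)]
    congr 1; ring
  rw [e] at h
  linarith

lemma sq_rpow_half (t p : ℝ) : (t ^ 2) ^ (p / 2) = |t| ^ p := by
  rw [← sq_abs t, ← Real.rpow_natCast |t| 2, ← Real.rpow_mul (abs_nonneg _)]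
  congr 1; push_cast; ring

lemma le_abs_one_add_rpow {p : ℝ} (hp : 2 ≤ p) (t : ℝ) :
    1 + p * t + p / 8 * t ^ 2 + 16 * p * |t / 16| ^ p ≤ |1 + t| ^ p := by
  rw [← sq_rpow_half (1 + t) p]
  by_cases ht : |t| ≤ 16
  · have h := one_add_mul_self_le_rpow_one_add (s := 2 * t + t ^ 2)
      (by nlinarith [sq_nonneg (1 + t)]) (p := p / 2) (by linarith)
    have e : 1 + (2 * t + t ^ 2) = (1 + t) ^ 2 := by ring
    rw [e] at h
    have h1 : |t / 16| ^ p ≤ (t / 16) ^ 2 := by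
      have hle : |t / 16| ≤ 1 := by
        rw [abs_div, abs_of_pos (by norm_num : (0 : ℝ) < 16)]; linarith
      calc |t / 16| ^ p ≤ |t / 16| ^ (2 : ℝ) :=
            Real.rpow_le_rpow_of_exponent_ge_of_imp (abs_nonneg _) hle hp (by
              intros; linarith)
        _ = (t / 16) ^ 2 := by
            rw [Real.rpow_ofNat, sq_abs]
    have h2 := mul_le_mul_of_nonneg_left h1 (by linarith : 0 ≤ 16 * p)
    nlinarith [mul_nonneg (by linarith : 0 ≤ p) (sq_nonneg t)]
  · push Not at ht
    have ht2 : 256 < t ^ 2 := by rw [← sq_abs]; nlinarith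
    have ha : 0 ≤ 1 + (2 * t + 3 / 4 * t ^ 2) := by
      nlinarith [sq_nonneg (t + 4)]
    have h := one_add_mul_self_le_rpow_one_add (s := 2 * t + 3 / 4 * t ^ 2)
      (by linarith) (p := p / 2) (by linarith)
    have hs := Real.add_rpow_le_rpow_add ha (by positivity : 0 ≤ (t / 2) ^ 2)
      (by linarith : 1 ≤ p / 2)
    have e : 1 + (2 * t + 3 / 4 * t ^ 2) + (t / 2) ^ 2 = (1 + t) ^ 2 := by ring
    rw [e, sq_rpow_half] at hs
    have h1 : 16 * p * |t / 16| ^ p ≤ |t / 2| ^ p := by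
      have e1 : |t / 2| ^ p = 8 ^ p * |t / 16| ^ p := by
        rw [← Real.mul_rpow (by norm_num) (abs_nonneg _)]
        congr 1
        rw [abs_div, abs_div, abs_of_pos (by norm_num : (0 : ℝ) < 16),
          abs_of_pos (by norm_num : (0 : ℝ) < 2)]
        ring
      rw [e1]
      exact mul_le_mul_of_nonneg_right (sixteen_mul_le_eight_rpow hp) (by positivity)
    nlinarith [mul_nonneg (by linarith : 0 ≤ p) (sq_nonneg t)]

/-- Scaled form of the lower bound: the `p`-th power along the step `-v`. -/
lemma le_abs_sub_rpow {p : ℝ} (hp : 2 ≤ p) (u v : ℝ) :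
    |u| ^ p - p * (|u| ^ (p - 2) * u * v) + p / 8 * (|u| ^ (p - 2) * v ^ 2)
      + 16 * p * |v / 16| ^ p ≤ |u - v| ^ p := by
  have hp0 : 0 < p := by linarith
  rcases eq_or_ne u 0 with rfl | hu
  · rw [abs_zero, Real.zero_rpow hp0.ne', zero_sub v, abs_neg]
    have e1 : |v| ^ p = 16 ^ p * |v / 16| ^ p := by
      rw [← Real.mul_rpow (by norm_num) (abs_nonneg _)]
      congr 1
      rw [abs_div, abs_of_pos (by norm_num : (0 : ℝ) < 16)]
      ring
    -- The quadratic term survives only for `p = 2`, because `0 ^ 0 = 1`.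
    rcases eq_or_lt_of_le hp with rfl | hp2
    · norm_num [div_pow]
      nlinarith [sq_nonneg v]
    · rw [Real.zero_rpow (by linarith), e1]
      have h16 : (8 : ℝ) ^ p ≤ 16 ^ p :=
        Real.rpow_le_rpow (by norm_num) (by norm_num) hp0.le
      have := mul_le_mul_of_nonneg_right ((sixteen_mul_le_eight_rpow hp).trans h16)
        (by positivity : 0 ≤ |v / 16| ^ p)
      linarith
  · obtain ⟨s, rfl⟩ : ∃ s, v = -(s * u) := ⟨-v / u, by field_simp⟩
    have hw : |u| ^ p = |u| ^ (p - 2) * u ^ 2 := by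
      rw [← sq_abs u, ← Real.rpow_natCast |u| 2, ← Real.rpow_add (abs_pos.2 hu)]
      congr 1; push_cast; ring
    have e1 : |u - -(s * u)| ^ p = |u| ^ p * |1 + s| ^ p := by
      rw [← Real.mul_rpow (abs_nonneg _) (abs_nonneg _), ← abs_mul]
      congr 2; ring
    have e2 : |-(s * u) / 16| ^ p = |u| ^ p * |s / 16| ^ p := by
      rw [← Real.mul_rpow (abs_nonneg _) (abs_nonneg _), ← abs_mul, ← abs_neg]
      congr 2; ring
    have key := mul_le_mul_of_nonneg_left (le_abs_one_add_rpow hp s)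
      (by positivity : 0 ≤ |u| ^ p)
    rw [e1, e2]
    refine le_trans (le_of_eq ?_) key
    rw [hw]; ring

/-- Bounds justifying the binary search over the residual value ν:
(i) every feasible residual value is at most `f(x) − Opt`;
(ii) the step towards any feasible `x′` certifies `(f(x) − f(x′))/(16p)`;
hence the optimal residual value lies between `(f(x) − Opt)/(16p)` and
`f(x) − Opt`. -/
theorem residual_binary_search_bounds
    {m₁ m₂ n d : ℕ} (p : ℝ) (hp : 2 ≤ p)
    (M : Matrix (Fin m₁) (Fin n) ℝ) (N : Matrix (Fin m₂) (Fin n) ℝ)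
    (b : Fin n → ℝ) (A : Matrix (Fin d) (Fin n) ℝ) (c : Fin d → ℝ)
    (f : (Fin n → ℝ) → ℝ)
    (hf : ∀ y : Fin n → ℝ,
      f y = b ⬝ᵥ y + ∑ i, ((M *ᵥ y) i) ^ 2 + ∑ i, |(N *ᵥ y) i| ^ p)
    (x : Fin n → ℝ) (hx : A *ᵥ x = c)
    (g : Fin n → ℝ)
    (hg : g = (1 / p) • b + (2 / p) • (Mᵀ *ᵥ (M *ᵥ x))
        + Nᵀ *ᵥ (fun i => |(N *ᵥ x) i| ^ (p - 2) * (N *ᵥ x) i))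
    (res : (Fin n → ℝ) → ℝ)
    (hres : ∀ Δ : Fin n → ℝ,
      res Δ = g ⬝ᵥ Δ
        - ((2 / p ^ 2) * ((M *ᵥ Δ) ⬝ᵥ (M *ᵥ Δ))
            + 2 * ∑ i, |(N *ᵥ x) i| ^ (p - 2) * ((N *ᵥ Δ) i) ^ 2)
        - ∑ i, |(N *ᵥ Δ) i| ^ p)
    (hbdd : BddBelow (f '' {y : Fin n → ℝ | A *ᵥ y = c})) :
    (∀ Δ : Fin n → ℝ, A *ᵥ Δ = 0 →
        res Δ ≤ f x - sInf (f '' {y : Fin n → ℝ | A *ᵥ y = c})) ∧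
    (∀ x' : Fin n → ℝ, A *ᵥ x' = c →
        (f x - f x') / (16 * p) ≤ res ((1 / 16 : ℝ) • (x - x'))) ∧
    ((f x - sInf (f '' {y : Fin n → ℝ | A *ᵥ y = c})) / (16 * p)
        ≤ sSup (res '' {Δ : Fin n → ℝ | A *ᵥ Δ = 0}) ∧
      sSup (res '' {Δ : Fin n → ℝ | A *ᵥ Δ = 0})
        ≤ f x - sInf (f '' {y : Fin n → ℝ | A *ᵥ y = c})) := by
  have hp0 : 0 < p := by linarith
  have hgd : ∀ Δ : Fin n → ℝ, g ⬝ᵥ Δ = 1 / p * (b ⬝ᵥ Δ)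
      + ∑ i, 2 / p * ((M *ᵥ x) i * (M *ᵥ Δ) i)
      + ∑ i, |(N *ᵥ x) i| ^ (p - 2) * (N *ᵥ x) i * (N *ᵥ Δ) i := by
    intro Δ
    rw [hg, add_dotProduct, add_dotProduct, smul_dotProduct, smul_dotProduct,
      mulVec_transpose, mulVec_transpose, ← dotProduct_mulVec, ← dotProduct_mulVec,
      ← Finset.mul_sum]
    rfl
  have hi : ∀ Δ : Fin n → ℝ, A *ᵥ Δ = 0 →
      res Δ ≤ f x - sInf (f '' {y : Fin n → ℝ | A *ᵥ y = c}) := by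
    intro Δ hΔ
    have hmem : A *ᵥ (x - (1 / p) • Δ) = c := by
      rw [mulVec_sub, mulVec_smul, hΔ, hx, smul_zero, sub_zero]
    have hinf := csInf_le hbdd (Set.mem_image_of_mem f hmem)
    have hM : ∑ i, ((M *ᵥ (x - (1 / p) • Δ)) i) ^ 2 ≤ ∑ i, ((M *ᵥ x) i) ^ 2
        - ∑ i, 2 / p * ((M *ᵥ x) i * (M *ᵥ Δ) i)
        + (2 / p ^ 2) * ((M *ᵥ Δ) ⬝ᵥ (M *ᵥ Δ)) := by
      rw [dotProduct, Finset.mul_sum, ← Finset.sum_sub_distrib, ← Finset.sum_add_distrib]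
      refine Finset.sum_le_sum fun i _ => ?_
      rw [mulVec_sub, mulVec_smul]
      simp only [Pi.sub_apply, Pi.smul_apply, smul_eq_mul]
      have : 0 ≤ (1 / p * (M *ᵥ Δ) i) ^ 2 := sq_nonneg _
      have e : 2 / p ^ 2 * ((M *ᵥ Δ) i * (M *ᵥ Δ) i) = 2 * (1 / p * (M *ᵥ Δ) i) ^ 2 := by
        field_simp
      rw [e]
      linear_combination this
    have hN : ∑ i, |(N *ᵥ (x - (1 / p) • Δ)) i| ^ p ≤ ∑ i, |(N *ᵥ x) i| ^ p
        - ∑ i, |(N *ᵥ x) i| ^ (p - 2) * (N *ᵥ x) i * (N *ᵥ Δ) i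
        + 2 * ∑ i, |(N *ᵥ x) i| ^ (p - 2) * ((N *ᵥ Δ) i) ^ 2
        + ∑ i, |(N *ᵥ Δ) i| ^ p := by
      rw [Finset.mul_sum, ← Finset.sum_sub_distrib, ← Finset.sum_add_distrib,
        ← Finset.sum_add_distrib]
      refine Finset.sum_le_sum fun i _ => ?_
      rw [mulVec_sub, mulVec_smul]
      simp only [Pi.sub_apply, Pi.smul_apply, smul_eq_mul]
      rw [one_div_mul_eq_div]
      exact abs_sub_div_rpow_le hp _ _
    rw [hf (x - (1 / p) • Δ), dotProduct_sub, dotProduct_smul, smul_eq_mul] at hinf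
    rw [hres, hgd, hf x]
    linarith
  have hii : ∀ x' : Fin n → ℝ, A *ᵥ x' = c →
      (f x - f x') / (16 * p) ≤ res ((1 / 16 : ℝ) • (x - x')) := by
    intro x' _
    obtain ⟨v, rfl⟩ : ∃ v, x' = x - v := ⟨x - x', by abel⟩
    rw [sub_sub_cancel]
    have hM : ∑ i, ((M *ᵥ x) i) ^ 2 - 16 * p * (∑ i, 2 / p * ((M *ᵥ x) i * (1 / 16 * (M *ᵥ v) i))
        - ∑ i, (2 / p ^ 2) * (1 / 16 * (M *ᵥ v) i * (1 / 16 * (M *ᵥ v) i)))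
        ≤ ∑ i, ((M *ᵥ (x - v)) i) ^ 2 := by
      rw [← Finset.sum_sub_distrib, Finset.mul_sum, ← Finset.sum_sub_distrib]
      refine Finset.sum_le_sum fun i _ => ?_
      rw [mulVec_sub, Pi.sub_apply]
      generalize (M *ᵥ x) i = a
      generalize (M *ᵥ v) i = w
      have e : a ^ 2 - 16 * p * (2 / p * (a * (1 / 16 * w))
          - 2 / p ^ 2 * (1 / 16 * w * (1 / 16 * w)))
          = a ^ 2 - 2 * a * w + 1 / (8 * p) * w ^ 2 := by
        field_simp; ring
      have hq : 1 / (8 * p) ≤ 1 := by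
        rw [div_le_one (by linarith)]; linarith
      rw [e]
      nlinarith [mul_le_mul_of_nonneg_right hq (sq_nonneg w)]
    have hN : ∑ i, |(N *ᵥ x) i| ^ p - 16 * p *
        (∑ i, |(N *ᵥ x) i| ^ (p - 2) * (N *ᵥ x) i * (1 / 16 * (N *ᵥ v) i)
        - ∑ i, 2 * (|(N *ᵥ x) i| ^ (p - 2) * (1 / 16 * (N *ᵥ v) i) ^ 2)
        - ∑ i, |1 / 16 * (N *ᵥ v) i| ^ p) ≤ ∑ i, |(N *ᵥ (x - v)) i| ^ p := by
      rw [← Finset.sum_sub_distrib, ← Finset.sum_sub_distrib, Finset.mul_sum,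
        ← Finset.sum_sub_distrib]
      refine Finset.sum_le_sum fun i _ => ?_
      rw [mulVec_sub, Pi.sub_apply]
      refine le_trans (le_of_eq ?_) (le_abs_sub_rpow hp ((N *ᵥ x) i) ((N *ᵥ v) i))
      rw [show (N *ᵥ v) i / 16 = 1 / 16 * (N *ᵥ v) i by ring]
      ring
    have hb : 16 * p * (1 / p * (1 / 16 * (b ⬝ᵥ v))) = b ⬝ᵥ v := by
      field_simp
    rw [div_le_iff₀ (by linarith), hres, hgd, hf x, hf (x - v), dotProduct_sub]
    simp only [mulVec_smul, Pi.smul_apply, dotProduct_smul, smul_dotProduct, smul_eq_mul]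
    have hd : 2 / p ^ 2 * (1 / 16 * (1 / 16 * (M *ᵥ v ⬝ᵥ M *ᵥ v)))
        = ∑ i, (2 / p ^ 2) * (1 / 16 * (M *ᵥ v) i * (1 / 16 * (M *ᵥ v) i)) := by
      rw [dotProduct, Finset.mul_sum, Finset.mul_sum, Finset.mul_sum]
      exact Finset.sum_congr rfl fun i _ => by ring
    rw [hd, Finset.mul_sum (a := (2 : ℝ))]
    linarith
  have hbd : BddAbove (res '' {Δ : Fin n → ℝ | A *ᵥ Δ = 0}) := by
    refine ⟨f x - sInf (f '' {y : Fin n → ℝ | A *ᵥ y = c}), ?_⟩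
    rintro _ ⟨Δ, hΔ, rfl⟩
    exact hi Δ hΔ
  refine ⟨hi, hii, ?_, ?_⟩
  · have h : f x - sSup (res '' {Δ : Fin n → ℝ | A *ᵥ Δ = 0}) * (16 * p)
        ≤ sInf (f '' {y : Fin n → ℝ | A *ᵥ y = c}) := by
      refine le_csInf ⟨f x, x, hx, rfl⟩ ?_
      rintro _ ⟨y, hy, rfl⟩
      have hy' : A *ᵥ y = c := hy
      have hmem : A *ᵥ ((1 / 16 : ℝ) • (x - y)) = 0 := by
        rw [mulVec_smul, mulVec_sub, hx, hy', sub_self, smul_zero]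
      have h1 := (hii y hy').trans (le_csSup hbd (Set.mem_image_of_mem res hmem))
      rw [div_le_iff₀ (by linarith)] at h1
      linarith
    rw [div_le_iff₀ (by linarith)]
    linarith
  · refine csSup_le ⟨res 0, 0, mulVec_zero A, rfl⟩ ?_
    rintro _ ⟨Δ, hΔ, rfl⟩
    exact hi Δ hΔ
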